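/- Let f : X → X be a transitive SFT with positive topological entropy. Then the set O of locally constant potentials φ ∈ LC(X,ℝ) having a unique maximizing measure (which is then a periodic orbit measure) has empty interior in LC(X,ℝ) with respect to the supremum norm: for every φ ∈ O and every ε > 0 there exists ψ ∈ LC(X,ℝ) with ‖φ − ψ‖_∞ < ε such that ψ has more than one ergodic maximizing measure. -/

import Mathlib

/-!
Write `b` for the maximal integral of `φ`. If `f` depends on `k ≥ 1` coordinates, any orbit segment
longer than `d ^ k` repeats a word of length `k`; closing up the segment between the repetitions
gives a periodic point, and cutting it out gives a shorter orbit segment. Hence Birkhoff sums grow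
at most like the best average over periodic orbits of period at most `d ^ k` (`S_bound`), so the
maximal integral of `f` is attained in the *finite* set `shortOrb A k` of such orbit measures
(`exists_max`). In particular the unique maximizing measure `μ₀` of `φ` is the orbit measure of a
periodic point `z`.

Positive entropy gives a word that does not occur in `z`, and transitivity a loop based at `z 0`
through this word. Turning many times around `z` and then following this loop, periodically, gives a
periodic point `y` whose orbit is disjoint from that of `z` and whose average is larger than
`b - ε / 2` (`exists_shadow`). Let `h` be the indicator of a clopen set containing the orbit of `z`
and missing that of `y`, and put `ψ_t = φ - t * h`. At `t = 0` the measure `μ₀` is strictly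
maximal, and at `t = ε / 2` it is beaten by the orbit measure of `y`. All the `ψ_t` depend on the
same number `K` of coordinates, so only the finitely many members of `shortOrb A K` compete, with
integrals affine in `t`. By the intermediate value theorem (`exists_tie`), at some `t ≤ ε / 2` the
measure `μ₀` ties for the maximum with another orbit measure; both are ergodic (`orb_ergodic`).
-/

open MeasureTheory

/-- The shift map on sequences. -/
def shift {A : Type*} (x : ℕ → A) : ℕ → A := fun n => x (n + 1)

namespace ErgOpt

/-! ### Sequences, Birkhoff sums and periodic points -/

/-- The `m`-th iterate of the shift, in closed form. -/
def T {α : Type*} (m : ℕ) (x : ℕ → α) : ℕ → α := fun n => x (n + m)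

/-- The subshift of finite type with transition matrix `A`. -/
def SFT {d : ℕ} (A : Fin d → Fin d → Bool) : Set (ℕ → Fin d) :=
  {x | ∀ n, A (x n) (x (n + 1)) = true}

/-- `f` depends only on the first `k` coordinates. -/
def LC {d : ℕ} (k : ℕ) (f : (ℕ → Fin d) → ℝ) : Prop :=
  ∀ x y : ℕ → Fin d, (∀ i < k, x i = y i) → f x = f y

/-- The Birkhoff sum of `f` over the first `n` points of the orbit of `x`. -/
def S {d : ℕ} (n : ℕ) (f : (ℕ → Fin d) → ℝ) (x : ℕ → Fin d) : ℝ :=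
  ∑ m ∈ Finset.range n, f (T m x)

/-- `p` is a period of `z`, not necessarily the least one. -/
def Per {α : Type*} (p : ℕ) (z : ℕ → α) : Prop := ∀ n, z (n + p) = z n

theorem Per.mul {α : Type*} {p : ℕ} {z : ℕ → α} (h : Per p z) (a n : ℕ) :
    z (n + a * p) = z n := by
  induction a with
  | zero => simp
  | succ a ih => rw [Nat.succ_mul, ← Nat.add_assoc, h, ih]

theorem Per.mod {α : Type*} {p : ℕ} {z : ℕ → α} (h : Per p z) (n : ℕ) :
    z (n % p) = z n := by
  conv_rhs => rw [← Nat.mod_add_div n p, Nat.mul_comm]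
  exact (h.mul _ _).symm

theorem T_shift {α : Type*} (m : ℕ) (x : ℕ → α) : shift (T m x) = T (m + 1) x := by
  funext n; simp [shift, T]; congr 1; omega

theorem iterate_shift {α : Type*} (m : ℕ) (x : ℕ → α) : shift^[m] x = T m x := by
  induction m with
  | zero => rfl
  | succ m ih => rw [Function.iterate_succ_apply', ih, T_shift]

theorem Per.T_eq {α : Type*} {p : ℕ} {z : ℕ → α} (h : Per p z) : T p z = z := funext h

theorem T_mem {d : ℕ} {A : Fin d → Fin d → Bool} {x : ℕ → Fin d} (hx : x ∈ SFT A) (m : ℕ) :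
    T m x ∈ SFT A := by
  intro n
  have := hx (n + m)
  simpa [T, Nat.add_right_comm] using this

/-- Repeating a closed path of length `q` gives a point of the subshift. -/
theorem loop_mem {d : ℕ} {A : Fin d → Fin d → Bool} {u : ℕ → Fin d} {q : ℕ} (hq : 0 < q)
    (hu : ∀ m < q, A (u m) (u (m + 1)) = true) (h0 : u q = u 0) :
    (fun m => u (m % q)) ∈ SFT A := by
  intro m
  have hm := Nat.mod_lt m hq
  have h1 := hu (m % q) hm
  show A (u (m % q)) (u ((m + 1) % q)) = true
  by_cases h : m % q + 1 = q
  · have : (m + 1) % q = 0 := by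
      rw [← Nat.mod_add_mod, h, Nat.mod_self]
    rw [this, ← h0]
    rwa [h] at h1
  · have : (m + 1) % q = m % q + 1 := by
      rw [← Nat.mod_add_mod, Nat.mod_eq_of_lt (by omega)]
    rwa [this]

theorem loop_per {α : Type*} (u : ℕ → α) (q : ℕ) : Per q (fun m => u (m % q)) := by
  intro n; simp

theorem exists_repeat {d : ℕ} (k : ℕ) (x : ℕ → Fin d) :
    ∃ i p, 0 < p ∧ i + p ≤ d ^ k ∧ ∀ l < k, x (l + i + p) = x (l + i) := by
  obtain ⟨a, b, hab, h⟩ := Fintype.exists_ne_map_eq_of_card_lt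
    (fun (i : Fin (d ^ k + 1)) (l : Fin k) => x (l + i)) (by simp)
  have key : ∀ a b : Fin (d ^ k + 1), a < b →
      (fun (l : Fin k) => x (l + a)) = (fun (l : Fin k) => x (l + b)) →
      ∃ i p, 0 < p ∧ i + p ≤ d ^ k ∧ ∀ l < k, x (l + i + p) = x (l + i) := by
    intro a b hab h
    have hab' : (a : ℕ) < b := hab
    refine ⟨a, b - a, by omega, by omega, fun l hl => ?_⟩
    have := congrFun h ⟨l, hl⟩
    simp only at this
    rw [this]; congr 1; omega
  rcases lt_or_gt_of_ne hab with h1 | h1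
  · exact key a b h1 h
  · exact key b a h1 h.symm

/-- If the word of length `k ≥ 1` seen at time `i` recurs at time `i + p`, then closing up
the segment in between gives a periodic point following `x` for `p + k` steps. -/
theorem exists_close {d : ℕ} {A : Fin d → Fin d → Bool} {k : ℕ} (hk : 0 < k) {x : ℕ → Fin d}
    (hx : x ∈ SFT A) {i p : ℕ} (hp : 0 < p) (h : ∀ l < k, x (l + i + p) = x (l + i)) :
    ∃ z ∈ SFT A, Per p z ∧ ∀ m < p + k, z m = x (m + i) := by
  refine ⟨fun m => (T i x) (m % p), loop_mem hp (fun m _ => T_mem hx i m) ?_, loop_per _ _, ?_⟩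
  · have := h 0 hk
    simp only [T]
    rw [← this]; congr 1; omega
  · intro m
    induction m using Nat.strong_induction_on with
    | _ m ih =>
      intro hm
      by_cases hmp : m < p
      · simp [T, Nat.mod_eq_of_lt hmp]
      · have h1 := ih (m - p) (by omega) (by omega)
        have h2 := h (m - p) (by omega)
        simp only at h1 ⊢
        rw [Nat.mod_eq_sub_mod (by omega), h1, ← h2]
        congr 1; omega

/-- Under the same recurrence, the segment can be cut out of `x`. -/
theorem splice_mem {d : ℕ} {A : Fin d → Fin d → Bool} {k : ℕ} (hk : 0 < k) {x : ℕ → Fin d}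
    (hx : x ∈ SFT A) {i p : ℕ} (h : ∀ l < k, x (l + i + p) = x (l + i)) :
    (fun m => if m < i then x m else x (m + p)) ∈ SFT A := by
  intro m
  show A (if m < i then x m else x (m + p)) (if m + 1 < i then x (m + 1) else x (m + 1 + p)) = true
  rcases lt_trichotomy (m + 1) i with h1 | h1 | h1
  · rw [if_pos (by omega), if_pos h1]; exact hx m
  · rw [if_pos (by omega), if_neg (by omega)]
    have := h 0 hk
    rw [Nat.zero_add, ← h1] at this
    rw [this]; exact hx m
  · rw [if_neg (by omega), if_neg (by omega)]
    have := hx (m + p)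
    rwa [Nat.add_right_comm] at this

theorem S_split {d : ℕ} (f : (ℕ → Fin d) → ℝ) (x : ℕ → Fin d) (a b : ℕ) :
    S (a + b) f x = S a f x + S b f (T a x) := by
  unfold S
  rw [Finset.sum_range_add]
  congr 1
  refine Finset.sum_congr rfl fun m _ => ?_
  congr 1
  funext n; simp only [T]; congr 1; omega

theorem S_congr {d k : ℕ} {f : (ℕ → Fin d) → ℝ} (hf : LC k f) {n : ℕ} {x y : ℕ → Fin d}
    (h : ∀ m < n, ∀ l < k, x (l + m) = y (l + m)) : S n f x = S n f y :=
  Finset.sum_congr rfl fun m hm => hf _ _ fun l hl => h m (Finset.mem_range.1 hm) l hl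

theorem S_le {d : ℕ} {f : (ℕ → Fin d) → ℝ} {B : ℝ} (hB : ∀ x, |f x| ≤ B) (n : ℕ)
    (x : ℕ → Fin d) : |S n f x| ≤ n * B := by
  unfold S
  refine (Finset.abs_sum_le_sum_abs _ _).trans ((Finset.sum_le_sum fun m _ => hB _).trans ?_)
  simp

/-- Birkhoff sums exceed linear growth at the best short-cycle rate by at most a constant:
short cycles are cut out of a long orbit segment one at a time. -/
theorem S_bound {d : ℕ} {A : Fin d → Fin d → Bool} {k : ℕ} (hk : 0 < k)
    {f : (ℕ → Fin d) → ℝ} (hf : LC k f) {B : ℝ} (hB : ∀ x, |f x| ≤ B) {b : ℝ}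
    (hb : ∀ p z, 0 < p → p ≤ d ^ k → z ∈ SFT A → Per p z → S p f z ≤ p * b) (n : ℕ) :
    ∀ x ∈ SFT A, S n f x ≤ n * b + (d ^ k : ℕ) * (B + |b|) := by
  induction n using Nat.strong_induction_on with
  | _ n ih =>
    intro x hx
    have hB0 : 0 ≤ B := (abs_nonneg _).trans (hB x)
    by_cases hn : n ≤ d ^ k
    · have h1 := (abs_le.1 (S_le hB n x)).2
      have h2 : (n : ℝ) ≤ (d ^ k : ℕ) := by exact_mod_cast hn
      have h3 : (n : ℝ) * (B + |b|) ≤ (d ^ k : ℕ) * (B + |b|) :=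
        mul_le_mul_of_nonneg_right h2 (by positivity)
      have h4 : (n : ℝ) * (-|b|) ≤ n * b :=
        mul_le_mul_of_nonneg_left (neg_abs_le b) (by positivity)
      linarith
    · obtain ⟨i, p, hp, hip, h⟩ := exists_repeat k x
      obtain ⟨z, hz, hpz, hzx⟩ := exists_close hk hx hp h
      obtain ⟨r, rfl⟩ : ∃ r, n = i + (p + r) := ⟨n - i - p, by omega⟩
      have hy := splice_mem hk hx h
      have h1 := ih (i + r) (by omega) _ hy
      have h2 := hb p z hp (by omega) hz hpz
      rw [S_split] at h1
      rw [S_split, S_split]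
      have e1 : S i f (fun m => if m < i then x m else x (m + p)) = S i f x := by
        refine S_congr hf fun m hm l hl => ?_
        show (if l + m < i then x (l + m) else x (l + m + p)) = x (l + m)
        split_ifs with hlm
        · rfl
        · have := h (l + m - i) (by omega)
          rwa [Nat.sub_add_cancel (by omega)] at this
      have e2 : S p f (T i x) = S p f z := by
        refine S_congr hf fun m hm l hl => ?_
        rw [hzx _ (by omega)]; rfl
      have e3 : T i (fun m => if m < i then x m else x (m + p)) = T p (T i x) := by
        funext m
        simp only [T]
        rw [if_neg (by omega)]
        congr 1; omega
      rw [e1, e3] at h1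
      rw [e2]
      push_cast at h1 ⊢
      linarith

/-! ### Locally constant functions and invariant measures -/

theorem LC.mono {d k l : ℕ} {f : (ℕ → Fin d) → ℝ} (hf : LC k f) (h : k ≤ l) : LC l f :=
  fun x y hxy => hf x y fun i hi => hxy i (by omega)

theorem LC.factor {d k : ℕ} {f : (ℕ → Fin d) → ℝ} (hf : LC k f) :
    ∃ g : (Fin k → Fin d) → ℝ, ∀ x, f x = g (fun i => x i) := by
  refine ⟨Function.extend (fun (x : ℕ → Fin d) (i : Fin k) => x i) f 0, fun x => ?_⟩
  have : Function.FactorsThrough f (fun (x : ℕ → Fin d) (i : Fin k) => x i) := by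
    intro x y hxy
    exact hf x y fun i hi => congrFun hxy ⟨i, hi⟩
  exact (this.extend_apply 0 x).symm

theorem LC.bounded {d k : ℕ} {f : (ℕ → Fin d) → ℝ} (hf : LC k f) : ∃ B, ∀ x, |f x| ≤ B := by
  obtain ⟨g, hg⟩ := hf.factor
  refine ⟨∑ v, |g v|, fun x => ?_⟩
  rw [hg]
  exact Finset.single_le_sum (f := fun v => |g v|) (fun _ _ => abs_nonneg _) (Finset.mem_univ _)

theorem LC.measurable {d k : ℕ} {f : (ℕ → Fin d) → ℝ} (hf : LC k f) : Measurable f := by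
  obtain ⟨g, hg⟩ := hf.factor
  have : f = g ∘ (fun (x : ℕ → Fin d) (i : Fin k) => x i) := funext hg
  rw [this]
  exact (measurable_of_finite g).comp (by fun_prop)

theorem LC.integrable {d k : ℕ} {f : (ℕ → Fin d) → ℝ} (hf : LC k f)
    (μ : Measure (ℕ → Fin d)) [IsFiniteMeasure μ] : Integrable f μ := by
  obtain ⟨B, hB⟩ := hf.bounded
  exact Integrable.of_bound hf.measurable.aestronglyMeasurable B (Filter.Eventually.of_forall hB)

theorem measurable_T {d : ℕ} (m : ℕ) : Measurable (T m : (ℕ → Fin d) → _) :=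
  measurable_pi_lambda _ fun _ => measurable_pi_apply _

theorem measurable_shift {d : ℕ} : Measurable (shift : (ℕ → Fin d) → _) :=
  measurable_pi_lambda _ fun _ => measurable_pi_apply _

theorem measurableSet_SFT {d : ℕ} (A : Fin d → Fin d → Bool) : MeasurableSet (SFT A) := by
  have : SFT A = ⋂ n, (fun x : ℕ → Fin d => (x n, x (n + 1))) ⁻¹' {q | A q.1 q.2 = true} := by
    ext x; simp [SFT]
  rw [this]
  exact MeasurableSet.iInter fun n =>
    ((measurable_pi_apply n).prodMk (measurable_pi_apply (n + 1))) (Set.toFinite _).measurableSet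

/-- The shift-invariant probability measures carried by the subshift. -/
def Inv {d : ℕ} (A : Fin d → Fin d → Bool) : Set (Measure (ℕ → Fin d)) :=
  {μ | IsProbabilityMeasure μ ∧ μ.map shift = μ ∧ μ (SFT A) = 1}

theorem map_T {d : ℕ} {μ : Measure (ℕ → Fin d)} (h : μ.map shift = μ) (m : ℕ) :
    μ.map (T m) = μ := by
  have h1 : MeasurePreserving shift μ μ := ⟨measurable_shift, h⟩
  have h2 : (T m : (ℕ → Fin d) → _) = shift^[m] := (funext fun x => iterate_shift m x).symm
  rw [h2]
  exact (h1.iterate m).map_eq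

theorem integral_S {d : ℕ} {A : Fin d → Fin d → Bool} {μ : Measure (ℕ → Fin d)}
    (hμ : μ ∈ Inv A) {k : ℕ} {f : (ℕ → Fin d) → ℝ} (hf : LC k f) (n : ℕ) :
    Integrable (S n f) μ ∧ ∫ x, S n f x ∂μ = n * ∫ x, f x ∂μ := by
  have := hμ.1
  have hi : ∀ m, Integrable (fun x => f (T m x)) μ := fun m => by
    have h := hf.integrable μ
    rw [← map_T hμ.2.1 m] at h
    exact h.comp_measurable (measurable_T m)
  have he : ∀ m, ∫ x, f (T m x) ∂μ = ∫ x, f x ∂μ := fun m => by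
    conv_rhs => rw [← map_T hμ.2.1 m]
    exact (integral_map (measurable_T m).aemeasurable hf.measurable.aestronglyMeasurable).symm
  refine ⟨integrable_finsetSum _ fun m _ => hi m, ?_⟩
  unfold S
  rw [integral_finsetSum _ fun m _ => hi m]
  simp [he]

theorem integral_le_of_S {d : ℕ} {A : Fin d → Fin d → Bool} {μ : Measure (ℕ → Fin d)}
    (hμ : μ ∈ Inv A) {k : ℕ} {f : (ℕ → Fin d) → ℝ} (hf : LC k f) {b C : ℝ}
    (h : ∀ n : ℕ, ∀ x ∈ SFT A, S n f x ≤ n * b + C) : ∫ x, f x ∂μ ≤ b := by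
  have := hμ.1
  have h1 : ∀ n : ℕ, n * ∫ x, f x ∂μ ≤ n * b + C := fun n => by
    obtain ⟨hi, he⟩ := integral_S hμ hf n
    rw [← he]
    have hae : ∀ᵐ x ∂μ, x ∈ SFT A := (mem_ae_iff_prob_eq_one (measurableSet_SFT A)).2 hμ.2.2
    have := integral_mono_ae hi (integrable_const (n * b + C)) (hae.mono fun x hx => h n x hx)
    simpa using this
  by_contra! hlt
  obtain ⟨n, hn⟩ := exists_nat_gt (C / (∫ x, f x ∂μ - b))
  have := (div_lt_iff₀ (sub_pos.2 hlt)).1 hn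
  have := h1 n
  nlinarith

/-! ### Periodic orbit measures -/

/-- The uniform measure on the first `p` points of the orbit of `z`. -/
noncomputable def orb {d : ℕ} (p : ℕ) (z : ℕ → Fin d) : Measure (ℕ → Fin d) :=
  (p : ENNReal)⁻¹ • ∑ i ∈ Finset.range p, Measure.dirac (T i z)

theorem integral_orb {d : ℕ} (p : ℕ) (z : ℕ → Fin d) (f : (ℕ → Fin d) → ℝ) :
    ∫ x, f x ∂(orb p z) = (p : ℝ)⁻¹ * S p f z := by
  unfold orb S
  rw [integral_smul_measure, integral_finsetSum_measure]
  · simp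
  · intro i _
    exact integrable_dirac (by simp)

theorem orb_mem {d : ℕ} {A : Fin d → Fin d → Bool} {p : ℕ} (hp : 0 < p) {z : ℕ → Fin d}
    (hz : z ∈ SFT A) (hpz : Per p z) : orb p z ∈ Inv A := by
  have hp0 : (p : ENNReal) ≠ 0 := by exact_mod_cast hp.ne'
  have hone : ∀ s : Set (ℕ → Fin d), MeasurableSet s → (∀ i, T i z ∈ s) → orb p z s = 1 := by
    intro s hs h
    simp only [orb, Measure.smul_apply, Measure.coe_finsetSum, Finset.sum_apply, smul_eq_mul]
    rw [Finset.sum_congr rfl (g := fun _ => 1) fun i _ => by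
      rw [Measure.dirac_apply' _ hs]; simp [h i]]
    simp [ENNReal.inv_mul_cancel hp0 (ENNReal.natCast_ne_top p)]
  refine ⟨⟨hone _ MeasurableSet.univ fun _ => trivial⟩, ?_,
    hone _ (measurableSet_SFT A) fun i => T_mem hz i⟩
  unfold orb
  rw [Measure.map_smul]
  congr 1
  have : (∑ i ∈ Finset.range p, Measure.dirac (T i z)).map shift
      = ∑ i ∈ Finset.range p, (Measure.dirac (T i z)).map shift := by
    have := map_sum (Measure.mapₗ (shift : (ℕ → Fin d) → _)) (fun i => Measure.dirac (T i z))
      (Finset.range p)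
    simpa [Measure.mapₗ_apply_of_measurable measurable_shift] using this
  rw [this]
  simp only [Measure.map_dirac' measurable_shift, T_shift]
  have h0 : T 0 z = z := rfl
  -- Measures cannot be subtracted, so the sum is reindexed cyclically instead of telescoped.
  obtain ⟨r, rfl⟩ : ∃ r, p = r + 1 := ⟨p - 1, by omega⟩
  rw [Finset.sum_range_succ, hpz.T_eq, Finset.sum_range_succ' _ r, h0]

theorem orb_ergodic {d : ℕ} {A : Fin d → Fin d → Bool} {p : ℕ} (hp : 0 < p) {z : ℕ → Fin d}
    (hz : z ∈ SFT A) (hpz : Per p z) : Ergodic shift (orb p z) := by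
  refine ⟨⟨measurable_shift, (orb_mem hp hz hpz).2.1⟩, ⟨fun s hs hinv => ?_⟩⟩
  have hT : ∀ i, T i z ∈ s ↔ z ∈ s := by
    intro i
    induction i with
    | zero => rfl
    | succ i ih =>
      rw [← ih, ← T_shift]
      conv_rhs => rw [← hinv]
      rfl
  have hzero : ∀ t : Set (ℕ → Fin d), MeasurableSet t → (∀ i, T i z ∉ t) → orb p z t = 0 := by
    intro t ht h
    simp only [orb, Measure.smul_apply, Measure.coe_finsetSum, Finset.sum_apply, smul_eq_mul]
    rw [Finset.sum_eq_zero fun i _ => by rw [Measure.dirac_apply' _ ht]; simp [h i]]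
    simp
  rw [Filter.eventuallyConst_set]
  by_cases h : z ∈ s
  · left
    rw [ae_iff]
    exact hzero _ hs.compl fun i hi => hi ((hT i).2 h)
  · right
    rw [ae_iff]
    simp only [not_not]
    exact hzero _ hs fun i hi => h ((hT i).1 hi)

/-- The orbit measures of periodic points of the subshift with a period at most `d ^ k`. -/
def shortOrb {d : ℕ} (A : Fin d → Fin d → Bool) (k : ℕ) : Set (Measure (ℕ → Fin d)) :=
  {μ | ∃ p z, 0 < p ∧ p ≤ d ^ k ∧ z ∈ SFT A ∧ Per p z ∧ μ = orb p z}

theorem shortOrb_finite {d : ℕ} (A : Fin d → Fin d → Bool) (k : ℕ) :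
    (shortOrb A k).Finite := by
  have hper : ∀ p, 0 < p → {z : ℕ → Fin d | Per p z}.Finite := by
    intro p hp
    refine Set.Finite.of_finite_image (f := fun z (i : Fin p) => z i) (Set.toFinite _) ?_
    intro z hz w hw h
    funext n
    rw [← Per.mod hz, ← Per.mod hw]
    exact congrFun h ⟨n % p, Nat.mod_lt _ hp⟩
  refine ((Set.finite_Ioc 0 (d ^ k)).biUnion
    (t := fun p => orb p '' {z : ℕ → Fin d | Per p z}) fun p hp =>
      (hper p hp.1).image _).subset ?_
  rintro μ ⟨p, z, hp, hpk, -, hz, rfl⟩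
  exact Set.mem_biUnion (x := p) ⟨hp, hpk⟩ ⟨z, hz, rfl⟩

/-- A function of `k ≥ 1` coordinates attains its maximal integral at a short periodic orbit. -/
theorem exists_max {d : ℕ} {A : Fin d → Fin d → Bool} (hne : (SFT A).Nonempty) {k : ℕ}
    (hk : 0 < k) {f : (ℕ → Fin d) → ℝ} (hf : LC k f) :
    ∃ e ∈ shortOrb A k, ∀ ν ∈ Inv A, ∫ x, f x ∂ν ≤ ∫ x, f x ∂e := by
  obtain ⟨x, hx⟩ := hne
  have hE : (shortOrb A k).Nonempty := by
    obtain ⟨i, p, hp, hip, h⟩ := exists_repeat k x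
    obtain ⟨z, hz, hpz, -⟩ := exists_close hk hx hp h
    exact ⟨_, p, z, hp, by omega, hz, hpz, rfl⟩
  obtain ⟨e, he, hmax⟩ := Set.exists_max_image _ (fun μ => ∫ x, f x ∂μ) (shortOrb_finite A k) hE
  refine ⟨e, he, fun ν hν => ?_⟩
  obtain ⟨B, hB⟩ := hf.bounded
  refine integral_le_of_S hν hf (S_bound hk hf hB fun p z hp hpk hz hpz => ?_)
  have := hmax _ ⟨p, z, hp, hpk, hz, hpz, rfl⟩
  rw [integral_orb, inv_mul_le_iff₀ (by exact_mod_cast hp)] at this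
  exact this

/-! ### Periodic orbits that shadow a given one -/

/-- `w` restricted to `{0, …, n}` is a path in the transition graph. -/
def IsPath {d : ℕ} (A : Fin d → Fin d → Bool) (n : ℕ) (w : ℕ → Fin d) : Prop :=
  ∀ m < n, A (w m) (w (m + 1)) = true

/-- Follow `v` for `a` steps, then `w`. -/
def cat {α : Type*} (a : ℕ) (v w : ℕ → α) : ℕ → α := fun m => if m < a then v m else w (m - a)

theorem cat_lt {α : Type*} {a : ℕ} {v w : ℕ → α} {m : ℕ} (h : m < a) : cat a v w m = v m :=
  if_pos h

theorem cat_add {α : Type*} {a : ℕ} {v w : ℕ → α} (m : ℕ) : cat a v w (a + m) = w m := by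
  simp [cat]

theorem IsPath.cat {d : ℕ} {A : Fin d → Fin d → Bool} {a b : ℕ} {v w : ℕ → Fin d}
    (hv : IsPath A a v) (hw : IsPath A b w) (h : v a = w 0) : IsPath A (a + b) (cat a v w) := by
  intro m hm
  rcases lt_trichotomy (m + 1) a with h1 | h1 | h1
  · rw [cat_lt (by omega), cat_lt h1]; exact hv m (by omega)
  · subst h1
    rw [cat_lt (by omega), ← Nat.add_zero (m + 1), cat_add, ← h]; exact hv m (by omega)
  · obtain ⟨r, rfl⟩ : ∃ r, m = a + r := ⟨m - a, by omega⟩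
    rw [Nat.add_assoc, cat_add, cat_add]; exact hw r (by omega)

theorem cat_zero {α : Type*} {a : ℕ} {v w : ℕ → α} (h : v a = w 0) : cat a v w 0 = v 0 := by
  by_cases ha : 0 < a
  · exact cat_lt ha
  · obtain rfl : a = 0 := by omega
    simp [ErgOpt.cat, h]

/-- Exponential growth of the number of words forces a word not occurring in `z`. -/
theorem exists_new_word {d : ℕ} {A : Fin d → Fin d → Bool}
    (hent : ∃ C : ℝ, 1 < C ∧ ∀ n : ℕ,
      C ^ n ≤ ({w : Fin n → Fin d | ∃ x ∈ SFT A, ∀ i : Fin n, x i = w i}.ncard : ℝ))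
    {p : ℕ} (hp : 0 < p) {z : ℕ → Fin d} (hpz : Per p z) :
    ∃ n, ∃ x ∈ SFT A, ∀ j, ¬ ∀ i < n, x i = z (i + j) := by
  obtain ⟨C, hC, h⟩ := hent
  obtain ⟨n, hn⟩ := pow_unbounded_of_one_lt (p : ℝ) hC
  refine ⟨n, ?_⟩
  by_contra! hcon
  have hsub : {w : Fin n → Fin d | ∃ x ∈ SFT A, ∀ i : Fin n, x i = w i} ⊆
      ((Finset.range p).image (fun j (i : Fin n) => z (i + j)) : Finset (Fin n → Fin d)) := by
    rintro w ⟨x, hx, hxw⟩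
    obtain ⟨j, hj⟩ := hcon x hx
    rw [Finset.mem_coe, Finset.mem_image]
    refine ⟨j % p, Finset.mem_range.2 (Nat.mod_lt _ hp), ?_⟩
    funext i
    rw [← hxw i, hj i i.2, ← hpz.mod (i + j % p), Nat.add_mod_mod, hpz.mod]
  have h1 := Set.ncard_le_ncard hsub (Finset.finite_toSet _)
  rw [Set.ncard_coe_finset] at h1
  have h2 := h1.trans Finset.card_image_le
  rw [Finset.card_range] at h2
  have h3 : ({w : Fin n → Fin d | ∃ x ∈ SFT A, ∀ i : Fin n, x i = w i}.ncard : ℝ) ≤ p := by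
    exact_mod_cast h2
  linarith [h n]

/-- A loop based at `z 0` that passes through the first `n` symbols of `x`. -/
theorem exists_loop {d : ℕ} {A : Fin d → Fin d → Bool}
    (htrans : ∀ i j : Fin d, ∃ n : ℕ, 0 < n ∧ ∃ w : ℕ → Fin d, w 0 = i ∧ w n = j ∧
      ∀ m < n, A (w m) (w (m + 1)) = true)
    {z : ℕ → Fin d} {n : ℕ} {x : ℕ → Fin d} (hx : x ∈ SFT A) :
    ∃ L s w, 0 < L ∧ s + n ≤ L ∧ w 0 = z 0 ∧ w L = z 0 ∧ IsPath A L w ∧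
      ∀ i < n, w (s + i) = x i := by
  obtain ⟨a, ha, u, hu0, hua, hu⟩ := htrans (z 0) (x 0)
  obtain ⟨b, hb, v, hv0, hvb, hv⟩ := htrans (x n) (z 0)
  have hx' : IsPath A n x := fun m _ => hx m
  have h1 : x n = v 0 := hv0.symm
  have h2 : u a = ErgOpt.cat n x v 0 := by rw [cat_zero h1, hua]
  refine ⟨a + (n + b), a, ErgOpt.cat a u (ErgOpt.cat n x v), by omega, by omega, ?_, ?_, ?_, ?_⟩
  · rw [cat_zero h2, hu0]
  · rw [cat_add, cat_add, hvb]
  · exact IsPath.cat hu (IsPath.cat hx' hv h1) h2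
  · intro i hi
    rw [cat_add, cat_lt hi]

/-- The point repeating (`N` turns around `z`, then one excursion through a new word) is
periodic, leaves the orbit of `z` within every window of `2 * q` symbols, and has Birkhoff
average close to that of `z`. -/
theorem exists_shadow {d : ℕ} {A : Fin d → Fin d → Bool}
    (htrans : ∀ i j : Fin d, ∃ n : ℕ, 0 < n ∧ ∃ w : ℕ → Fin d, w 0 = i ∧ w n = j ∧
      ∀ m < n, A (w m) (w (m + 1)) = true)
    (hent : ∃ C : ℝ, 1 < C ∧ ∀ n : ℕ,
      C ^ n ≤ ({w : Fin n → Fin d | ∃ x ∈ SFT A, ∀ i : Fin n, x i = w i}.ncard : ℝ))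
    {p : ℕ} (hp : 0 < p) {z : ℕ → Fin d} (hz : z ∈ SFT A) (hpz : Per p z)
    {k : ℕ} {f : (ℕ → Fin d) → ℝ} (hf : LC k f) {δ : ℝ} (hδ : 0 < δ) :
    ∃ q y, 0 < q ∧ y ∈ SFT A ∧ Per q y ∧
      (∀ a < q, ∀ j, ¬ ∀ i < 2 * q, T a y i = T j z i) ∧
      (p : ℝ)⁻¹ * S p f z - δ < (q : ℝ)⁻¹ * S q f y := by
  obtain ⟨n, x, hx, hnew⟩ := exists_new_word hent hp hpz
  obtain ⟨L, s, w, hL, hsL, hw0, hwL, hw, hwx⟩ := exists_loop htrans (z := z) (n := n) hx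
  obtain ⟨B, hB⟩ := hf.bounded
  set b : ℝ := (p : ℝ)⁻¹ * S p f z with hb
  have hB0 : 0 ≤ B := (abs_nonneg _).trans (hB z)
  set D : ℝ := |b| + B with hD
  have hD0 : 0 ≤ D := by positivity
  obtain ⟨N₀, hN₀⟩ := exists_nat_gt ((2 * k + L) * D / δ)
  set N := max N₀ k with hN
  have hNp : N ≤ N * p := Nat.le_mul_of_pos_right _ hp
  have hkN : k ≤ N * p := (le_max_right _ _).trans hNp
  have hzN : z (N * p) = w 0 := by
    rw [hw0]; simpa using hpz.mul N 0
  set u := ErgOpt.cat (N * p) z w with hu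
  have hpu : IsPath A (N * p + L) u := IsPath.cat (fun m _ => hz m) hw hzN
  set q := N * p + L with hq
  have hq0 : 0 < q := by omega
  have huq : u q = u 0 := by rw [hu, hq, cat_add, cat_zero hzN, hwL]
  set y : ℕ → Fin d := fun m => u (m % q) with hy
  have hyq : Per q y := loop_per u q
  have hyz : ∀ m < N * p, y m = z m := fun m hm => by
    rw [hy]; simp only
    rw [Nat.mod_eq_of_lt (by omega), hu, cat_lt hm]
  have hyx : ∀ i < n, y (N * p + s + i) = x i := fun i hi => by
    rw [hy]; simp only
    rw [Nat.mod_eq_of_lt (by omega), hu, Nat.add_assoc, cat_add, hwx i hi]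
  refine ⟨q, y, hq0, loop_mem hq0 hpu huq, hyq, ?_, ?_⟩
  · intro a ha j hj
    refine hnew (N * p + s + q - a + j) fun i hi => ?_
    have h1 := hj (N * p + s + q - a + i) (by omega)
    simp only [T] at h1
    rw [← hyx i hi, ← hyq]
    rw [show N * p + s + i + q = N * p + s + q - a + i + a by omega, h1]
    congr 1; omega
  · have hSz : S (N * p) f z = (N * p : ℕ) * b := by
      have : ∀ N : ℕ, S (N * p) f z = (N * p : ℕ) * b := by
        intro N
        induction N with
        | zero => simp [S]
        | succ N ih =>
          have hT : T (N * p) z = z := funext fun m => hpz.mul N m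
          have hp' : (p : ℝ) ≠ 0 := by exact_mod_cast hp.ne'
          have hSb : S p f z = p * b := by rw [hb]; field_simp
          rw [Nat.succ_mul, S_split, ih, hT, hSb]
          push_cast; ring
      exact this N
    obtain ⟨R, hR⟩ : ∃ R, N * p = R + k := ⟨N * p - k, by omega⟩
    have e1 : S R f y = S R f z := by
      refine S_congr hf fun m hm l hl => hyz _ (by omega)
    have e2 : S q f y = S R f y + S k f (T R y) + S L f (T (R + k) y) := by
      rw [hq, hR, S_split, S_split]
    have e3 : S (N * p) f z = S R f z + S k f (T R z) := by rw [hR, S_split]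
    have i1 := (abs_le.1 (S_le hB k (T R y))).1
    have i2 := (abs_le.1 (S_le hB k (T R z))).2
    have i3 := (abs_le.1 (S_le hB L (T (R + k) y))).1
    have hNδ : (2 * k + L) * D < q * δ := by
      rw [div_lt_iff₀ hδ] at hN₀
      have : (N₀ : ℝ) ≤ q := by
        exact_mod_cast (le_max_left _ _).trans (hNp.trans (Nat.le_add_right _ L))
      nlinarith
    have hqr : (q : ℝ) = (N * p : ℕ) + L := by rw [hq]; push_cast; ring
    have hLb : (L : ℝ) * b ≤ L * |b| := mul_le_mul_of_nonneg_left (le_abs_self b) (by positivity)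
    have hkb : 0 ≤ (k : ℝ) * |b| := by positivity
    rw [lt_inv_mul_iff₀ (by exact_mod_cast hq0)]
    have hmain : (q : ℝ) * b - (2 * k + L) * D ≤ S q f y := by
      rw [e2, e1, hqr, hD]
      nlinarith
    linarith

/-- For finitely many functions affine in `t`, if `i₀` is strictly dominant at `0` and dominated
at `δ`, then at some intermediate time it is maximal together with a different index. -/
theorem exists_tie {ι : Type*} {E : Set ι} (hE : E.Finite) {i₀ : ι} {F H : ι → ℝ} {δ : ℝ}
    (hδ : 0 < δ) (h0 : ∀ i ∈ E, i ≠ i₀ → F i < F i₀)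
    (h1 : ∃ i ∈ E, F i₀ - δ * H i₀ < F i - δ * H i) :
    ∃ t, 0 ≤ t ∧ t ≤ δ ∧ ∃ j ∈ E, j ≠ i₀ ∧ F j - t * H j = F i₀ - t * H i₀ ∧
      ∀ i ∈ E, F i - t * H i ≤ F i₀ - t * H i₀ := by
  classical
  obtain ⟨j₁, hj₁, hlt⟩ := h1
  have hj₁0 : j₁ ≠ i₀ := fun h => by rw [h] at hlt; exact lt_irrefl _ hlt
  set E' : Finset ι := hE.toFinset.erase i₀ with hE'
  have hmem : ∀ i, i ∈ E' ↔ i ≠ i₀ ∧ i ∈ E := by simp [hE']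
  have hne : E'.Nonempty := ⟨j₁, (hmem _).2 ⟨hj₁0, hj₁⟩⟩
  set g : ℝ → ℝ := fun t => E'.sup' hne (fun i => (F i - t * H i) - (F i₀ - t * H i₀)) with hg
  have hcont : Continuous g :=
    Continuous.finset_sup'_apply hne fun i _ => by fun_prop
  have hg0 : g 0 ≤ 0 := Finset.sup'_le _ _ fun i hi => by
    have := h0 i ((hmem i).1 hi).2 ((hmem i).1 hi).1
    linarith
  have hg1 : 0 ≤ g δ := by
    refine le_trans ?_ (Finset.le_sup' _ ((hmem j₁).2 ⟨hj₁0, hj₁⟩))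
    linarith
  obtain ⟨t, ⟨ht0, ht1⟩, ht⟩ := intermediate_value_Icc hδ.le hcont.continuousOn ⟨hg0, hg1⟩
  obtain ⟨j, hj, hje⟩ := Finset.exists_mem_eq_sup' hne
    (fun i => (F i - t * H i) - (F i₀ - t * H i₀))
  refine ⟨t, ht0, ht1, j, ((hmem j).1 hj).2, ((hmem j).1 hj).1, ?_, fun i hi => ?_⟩
  · have : g t = (F j - t * H j) - (F i₀ - t * H i₀) := hje
    linarith
  · by_cases hi0 : i = i₀
    · rw [hi0]
    · have : (F i - t * H i) - (F i₀ - t * H i₀) ≤ g t :=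
        Finset.le_sup' (fun i => (F i - t * H i) - (F i₀ - t * H i₀)) ((hmem i).2 ⟨hi0, hi⟩)
      linarith

end ErgOpt

/-- Theorem C: Let `X` be a transitive SFT with positive topological
entropy (expressed by exponential growth of the number of nonempty cylinders).  Then
the set `O` of locally constant potentials with a unique maximizing measure has empty
interior in `LC(X,ℝ)` for the supremum norm: for every locally constant `φ` with a
unique maximizing measure and every `ε > 0` there is a locally constant `ψ` with
`‖φ − ψ‖_∞ < ε` on `X` having (at least) two distinct ergodic maximizing measures. -/
theorem statement18 {d : ℕ} (A : Fin d → Fin d → Bool)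
    (X : Set (ℕ → Fin d))
    (hX : X = {x | ∀ n, A (x n) (x (n + 1)) = true})
    -- transitivity (irreducibility of the transition matrix)
    (htrans : ∀ i j : Fin d, ∃ n : ℕ, 0 < n ∧ ∃ w : ℕ → Fin d, w 0 = i ∧ w n = j ∧
      ∀ m < n, A (w m) (w (m + 1)) = true)
    -- positive topological entropy: the number of nonempty cylinders of length n
    -- grows exponentially
    (hent : ∃ C : ℝ, 1 < C ∧ ∀ n : ℕ,
      C ^ n ≤ ({w : Fin n → Fin d | ∃ x ∈ X, ∀ i : Fin n, x i = w i}.ncard : ℝ))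
    -- the set of invariant probability measures supported on X
    (M : Set (Measure (ℕ → Fin d)))
    (hM : M = {μ | IsProbabilityMeasure μ ∧ μ.map shift = μ ∧ μ X = 1})
    -- φ is locally constant and has a unique maximizing measure (φ ∈ O)
    (φ : (ℕ → Fin d) → ℝ)
    (hφLC : ∃ k : ℕ, ∀ x y : ℕ → Fin d, (∀ i < k, x i = y i) → φ x = φ y)
    (hφO : ∃! μ, μ ∈ M ∧ ∀ ν ∈ M, ∫ x, φ x ∂ν ≤ ∫ x, φ x ∂μ)
    (ε : ℝ) (hε : 0 < ε) :
    ∃ ψ : (ℕ → Fin d) → ℝ,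
      (∃ k : ℕ, ∀ x y : ℕ → Fin d, (∀ i < k, x i = y i) → ψ x = ψ y) ∧
      (∀ x ∈ X, |φ x - ψ x| < ε) ∧
      ∃ μ₁ μ₂, μ₁ ≠ μ₂ ∧
        μ₁ ∈ M ∧ μ₂ ∈ M ∧ Ergodic shift μ₁ ∧ Ergodic shift μ₂ ∧
        (∀ ν ∈ M, ∫ x, ψ x ∂ν ≤ ∫ x, ψ x ∂μ₁) ∧
        (∀ ν ∈ M, ∫ x, ψ x ∂ν ≤ ∫ x, ψ x ∂μ₂) := by
  classical
  subst hX hM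
  change ∃! μ, μ ∈ ErgOpt.Inv A ∧ ∀ ν ∈ ErgOpt.Inv A, ∫ x, φ x ∂ν ≤ ∫ x, φ x ∂μ at hφO
  obtain ⟨k₀, hk₀⟩ := hφLC
  have hφ : ErgOpt.LC (k₀ + 1) φ := ErgOpt.LC.mono (k := k₀) hk₀ (Nat.le_succ _)
  obtain ⟨μ₀, ⟨hμ₀, hmax₀⟩, huniq⟩ := hφO
  have hne : (ErgOpt.SFT A).Nonempty := by
    by_contra h
    rw [Set.not_nonempty_iff_eq_empty] at h
    have := hμ₀.2.2
    rw [h] at this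
    simp at this
  have hshort : ∀ k, ErgOpt.shortOrb A k ⊆ ErgOpt.Inv A := by
    rintro k _ ⟨p, z, hp, -, hz, hpz, rfl⟩
    exact ErgOpt.orb_mem hp hz hpz
  have hμ₀E : ∀ k, k₀ + 1 ≤ k → μ₀ ∈ ErgOpt.shortOrb A k := by
    intro k hk
    obtain ⟨e, he, hemax⟩ := ErgOpt.exists_max hne (by omega) (hφ.mono hk)
    rwa [← huniq e ⟨hshort k he, hemax⟩]
  obtain ⟨p, z, hp, -, hz, hpz, hμz⟩ := hμ₀E _ le_rfl
  obtain ⟨q, y, hq, hy, hqy, hsep, hclose⟩ :=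
    ErgOpt.exists_shadow htrans hent hp hz hpz hφ (half_pos hε)
  -- The indicator of a clopen neighbourhood of the orbit of `z` that misses the orbit of `y`.
  set h : (ℕ → Fin d) → ℝ :=
    fun v => if ∃ j, ∀ i < 2 * q, v i = ErgOpt.T j z i then 1 else 0 with hh
  have hhLC : ErgOpt.LC (2 * q) h := by
    intro v v' hv
    have : (∃ j, ∀ i < 2 * q, v i = ErgOpt.T j z i) ↔ ∃ j, ∀ i < 2 * q, v' i = ErgOpt.T j z i := by
      refine exists_congr fun j => forall₂_congr fun i hi => ?_
      rw [hv i hi]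
    simp only [hh, this]
  set K := max (k₀ + 1) (2 * q) with hK
  have hφK : ErgOpt.LC K φ := hφ.mono (le_max_left _ _)
  have hhK : ErgOpt.LC K h := hhLC.mono (le_max_right _ _)
  have hψK : ∀ t : ℝ, ErgOpt.LC K (fun x => φ x - t * h x) := fun t v v' hv => by
    simp only [hφK v v' hv, hhK v v' hv]
  have hsplit : ∀ t : ℝ, ∀ ν ∈ ErgOpt.Inv A,
      ∫ x, (φ x - t * h x) ∂ν = ∫ x, φ x ∂ν - t * ∫ x, h x ∂ν := by
    intro t ν hν
    have := hν.1
    rw [integral_sub (hφK.integrable ν) ((hhK.integrable ν).const_mul t), integral_const_mul]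
  have hhz : ∫ x, h x ∂μ₀ = 1 := by
    have : ErgOpt.S p h z = p := by
      unfold ErgOpt.S
      rw [Finset.sum_congr rfl (g := fun _ => (1 : ℝ)) fun m _ => if_pos ⟨m, fun _ _ => rfl⟩]
      simp
    rw [hμz, ErgOpt.integral_orb, this]
    exact inv_mul_cancel₀ (by exact_mod_cast hp.ne')
  have hhy : ∫ x, h x ∂(ErgOpt.orb q y) = 0 := by
    have : ErgOpt.S q h y = 0 := by
      refine Finset.sum_eq_zero fun m hm => if_neg ?_
      rintro ⟨j, hj⟩
      exact hsep m (Finset.mem_range.1 hm) j hj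
    rw [ErgOpt.integral_orb, this, mul_zero]
  have hνM : ErgOpt.orb q y ∈ ErgOpt.Inv A := ErgOpt.orb_mem hq hy hqy
  rw [← ErgOpt.integral_orb, ← ErgOpt.integral_orb, ← hμz] at hclose
  have hK0 : 0 < K := lt_of_lt_of_le (Nat.succ_pos _) (le_max_left _ _)
  have htie := ErgOpt.exists_tie (ErgOpt.shortOrb_finite A K) (i₀ := μ₀)
    (F := fun μ => ∫ x, φ x ∂μ) (H := fun μ => ∫ x, h x ∂μ) (half_pos hε)
    (fun e he hne => by
      refine lt_of_le_of_ne (hmax₀ e (hshort K he)) fun heq => hne ?_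
      exact huniq e ⟨hshort K he, fun ν hν => (hmax₀ ν hν).trans heq.ge⟩)
    (by
      obtain ⟨e, he, hemax⟩ := ErgOpt.exists_max hne hK0 (hψK (ε / 2))
      refine ⟨e, he, ?_⟩
      have := hemax _ hνM
      rw [hsplit _ _ hνM, hsplit _ _ (hshort K he), hhy] at this
      simp only [hhz]
      linarith)
  obtain ⟨t, ht0, htε, μ₁, hμ₁, hμ₁ne, heq, hall⟩ := htie
  obtain ⟨e, he, hemax⟩ := ErgOpt.exists_max hne hK0 (hψK t)
  have hμ₀max : ∀ ν ∈ ErgOpt.Inv A,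
      ∫ x, (φ x - t * h x) ∂ν ≤ ∫ x, (φ x - t * h x) ∂μ₀ := fun ν hν => by
    refine (hemax ν hν).trans ?_
    rw [hsplit _ _ (hshort K he), hsplit _ _ hμ₀]
    exact hall e he
  have herg : ∀ e ∈ ErgOpt.shortOrb A K, Ergodic shift e := by
    rintro _ ⟨p, z, hp, -, hz, hpz, rfl⟩
    exact ErgOpt.orb_ergodic hp hz hpz
  refine ⟨fun x => φ x - t * h x, ⟨K, hψK t⟩, fun x _ => ?_, μ₁, μ₀, hμ₁ne, hshort K hμ₁, hμ₀,
    herg _ hμ₁, herg _ (hμ₀E K (le_max_left _ _)), fun ν hν => ?_, hμ₀max⟩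
  · have hx1 : |h x| ≤ 1 := by simp only [hh]; split_ifs <;> simp
    rw [sub_sub_cancel, abs_mul, abs_of_nonneg ht0]
    nlinarith [abs_nonneg (h x)]
  · refine (hμ₀max ν hν).trans ?_
    rw [hsplit _ _ (hshort K hμ₁), hsplit _ _ hμ₀]
    exact heq.ge
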